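/- Let p ≥ 2, let μ₁ ∈ ℝ^p and β ∈ ℝ, and let X ∼ N(μ₁, I_p) and Y ∼ N(βμ₁, I_p) be independent. Define R(β̂) = inf_{b ∈ ℝ} (Y − bX)ᵀ(Y − bX)/(1 + b²). Then R(β̂) is stochastically dominated by the chi-squared distribution with p degrees of freedom: for every t ≥ 0, P(R(β̂) > t) ≤ P(Z > t) where Z ∼ χ²_p. -/

import Mathlib

open MeasureTheory ProbabilityTheory

/-- The multivariate normal distribution `N(μ, I_p)` on `ℝ^p`, realized as the product of
independent one-dimensional Gaussians `N(μ i, 1)`. -/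
noncomputable def mvGaussianId (p : ℕ) (μ : Fin p → ℝ) : Measure (Fin p → ℝ) :=
  Measure.pi fun i => gaussianReal (μ i) 1

/-- The chi-squared distribution with `k` degrees of freedom, i.e. the Gamma distribution
with shape `k/2` and rate `1/2`. -/
noncomputable def chiSquared (k : ℝ) : Measure ℝ :=
  gammaMeasure (k / 2) (1 / 2)


open Set in
lemma aux_mgf_gamma (a t : ℝ) (ha : 0 < a) :
    mgf id (gammaMeasure a (1/2)) t = if t < 1/2 then ((1/2)/(1/2 - t)) ^ a else 0 := by
  have h0 : mgf id (gammaMeasure a (1/2)) t =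
      ∫ x in Ioi (0:ℝ), ((1/2:ℝ)^a / Real.Gamma a) * (x ^ (a-1) * Real.exp (-((1/2 - t) * x))) := by
    rw [mgf, gammaMeasure, integral_withDensity_eq_integral_toReal_smul]
    · rw [← integral_indicator measurableSet_Ioi]
      apply integral_congr_ae
      have : ∀ᵐ x : ℝ, x ≠ 0 := by simp [ae_iff]
      filter_upwards [this] with x hx
      simp only [gammaPDF, smul_eq_mul, id]
      rw [ENNReal.toReal_ofReal (gammaPDFReal_nonneg ha (by norm_num) x)]
      rcases lt_or_gt_of_ne hx with h | h
      · rw [indicator_of_notMem (by simpa using h.le), gammaPDFReal, if_neg (not_le.2 h), zero_mul]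
      · rw [indicator_of_mem (by simpa using h), gammaPDFReal, if_pos h.le]
        rw [mul_assoc, ← Real.exp_add, mul_assoc]
        ring_nf
    · exact (measurable_gammaPDFReal a (1/2)).ennreal_ofReal
    · exact ae_of_all _ fun x => by simp [gammaPDF]
  rw [h0, integral_const_mul]
  split_ifs with ht
  · have h2 : 0 < 1/2 - t := by linarith
    rw [Real.integral_rpow_mul_exp_neg_mul_Ioi ha h2]
    have := (Real.Gamma_pos_of_pos ha).ne'
    rw [Real.div_rpow (by norm_num) h2.le, Real.div_rpow (by norm_num) h2.le, Real.one_rpow]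
    field_simp
  · rw [integral_undef, mul_zero]
    intro h
    refine not_integrableOn_Ioi_rpow (a - 1) ?_
    refine Integrable.mono' h (by fun_prop) ?_
    filter_upwards [ae_restrict_mem measurableSet_Ioi] with x hx
    have hx : 0 < x := hx
    rw [Real.norm_of_nonneg (by positivity)]
    refine le_mul_of_one_le_right (by positivity) (Real.one_le_exp ?_)
    nlinarith

lemma aux_gauss_sq (t : ℝ) :
    ∫ x, Real.exp (t * x ^ 2) ∂(gaussianReal 0 1) = √((1/2) / (1/2 - t)) := by
  rw [integral_gaussianReal_eq_integral_smul one_ne_zero]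
  have : ∀ x : ℝ, gaussianPDFReal 0 1 x • Real.exp (t * x ^ 2) =
      (√(2 * Real.pi))⁻¹ * Real.exp (-(1/2 - t) * x ^ 2) := by
    intro x
    simp only [gaussianPDFReal, smul_eq_mul, NNReal.coe_one, mul_assoc, ← Real.exp_add]
    ring_nf
  simp_rw [this]
  rw [integral_const_mul, integral_gaussian, ← Real.sqrt_inv, ← Real.sqrt_mul (by positivity)]
  congr 1
  have := Real.pi_ne_zero
  field_simp

lemma aux_mgf_sum (p : ℕ) (t : ℝ) :
    mgf (fun z : Fin p → ℝ => ∑ i, z i ^ 2) (Measure.pi fun _ : Fin p => gaussianReal 0 1) t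
      = √((1/2) / (1/2 - t)) ^ p := by
  rw [mgf]
  simp_rw [Finset.mul_sum, Real.exp_sum]
  rw [integral_fintype_prod_eq_pow (fun x : ℝ => Real.exp (t * x ^ 2)), aux_gauss_sq]
  simp

lemma aux_chi (p : ℕ) (hp : 0 < p) :
    (Measure.pi fun _ : Fin p => gaussianReal 0 1).map (fun z : Fin p → ℝ => ∑ i, z i ^ 2)
      = gammaMeasure (p / 2 : ℝ) (1/2) := by
  have ha : (0:ℝ) < p / 2 := by positivity
  have := isProbabilityMeasure_gammaMeasure ha (r := 1/2) (by norm_num)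
  have hm : Measurable (fun z : Fin p → ℝ => ∑ i, z i ^ 2) := by fun_prop
  have := Measure.isProbabilityMeasure_map
    (μ := Measure.pi fun _ : Fin p => gaussianReal 0 1) hm.aemeasurable
  have hmgf : mgf id (gammaMeasure (p / 2 : ℝ) (1/2)) = mgf (fun z : Fin p → ℝ => ∑ i, z i ^ 2)
      (Measure.pi fun _ : Fin p => gaussianReal 0 1) := by
    ext t
    rw [aux_mgf_sum, aux_mgf_gamma _ _ ha]
    split_ifs with ht
    · have h2 : 0 ≤ (1/2) / (1/2 - t) := div_nonneg (by norm_num) (by linarith)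
      rw [Real.sqrt_eq_rpow, ← Real.rpow_mul_natCast h2]
      ring_nf
    · rw [Real.sqrt_eq_zero_of_nonpos, zero_pow hp.ne']
      exact div_nonpos_of_nonneg_of_nonpos (by norm_num) (by linarith)
  have hint : (0:ℝ) ∈ interior (integrableExpSet id (gammaMeasure (p / 2 : ℝ) (1/2))) := by
    rw [mem_interior]
    refine ⟨Set.Iio (1/2), ?_, isOpen_Iio, by simp⟩
    intro t ht
    have ht : t < 1/2 := ht
    refine Integrable.of_integral_ne_zero ?_
    change mgf id (gammaMeasure (p / 2 : ℝ) (1/2)) t ≠ 0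
    rw [aux_mgf_gamma _ _ ha, if_pos ht]
    have : 0 < 1/2 - t := by linarith
    positivity
  have key := eqOn_complexMGF_of_mgf hmgf
  symm
  apply Measure.ext_of_charFun
  ext t
  have := key (show (t * Complex.I : ℂ) ∈ _ by simpa using hint)
  rw [charFun_apply_real, charFun_apply_real, integral_map hm.aemeasurable (by fun_prop)]
  simp only [complexMGF, id] at this
  convert this using 4 <;> push_cast <;> ring

lemma aux_lin (m β : ℝ) :
    ((gaussianReal m 1).prod (gaussianReal (β * m) 1)).map
      (fun q : ℝ × ℝ => (q.2 - β * q.1) / √(1 + β ^ 2)) = gaussianReal 0 1 := by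
  set s := √(1 + β ^ 2) with hs
  have hs0 : 0 < s := by positivity
  have hs2 : s ^ 2 = 1 + β ^ 2 := Real.sq_sqrt (by positivity)
  have hf : (fun q : ℝ × ℝ => (q.2 - β * q.1) / s) =
      (fun q : ℝ × ℝ => q.1 + q.2) ∘ Prod.map (fun x => (-β / s) * x) (fun x => s⁻¹ * x) := by
    ext q
    simp only [Function.comp, Prod.map]
    field_simp
    ring
  rw [hf, ← Measure.map_map (by fun_prop) (by fun_prop), ← Measure.map_prod_map _ _ (by fun_prop) (by fun_prop),
    gaussianReal_map_const_mul, gaussianReal_map_const_mul]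
  change Measure.conv _ _ = _
  rw [gaussianReal_conv_gaussianReal]
  congr 1
  · field_simp; ring
  · ext
    simp
    field_simp
    linarith

theorem profile_llr_stochastically_dominated_by_chiSq
    {Ω : Type*} [MeasureSpace Ω] [IsProbabilityMeasure (ℙ : Measure Ω)]
    (p : ℕ) (hp : 2 ≤ p) (μ₁ : Fin p → ℝ) (β : ℝ)
    (X Y : Ω → Fin p → ℝ) (hX : Measurable X) (hY : Measurable Y)
    (hXlaw : Measure.map X ℙ = mvGaussianId p μ₁)
    (hYlaw : Measure.map Y ℙ = mvGaussianId p (fun i => β * μ₁ i))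
    (hindep : IndepFun X Y ℙ)
    (R : Ω → ℝ)
    (hR : ∀ ω, R ω = ⨅ b : ℝ, (∑ i, (Y ω i - b * X ω i) ^ 2) / (1 + b ^ 2)) :
    ∀ t : ℝ, 0 ≤ t → ℙ {ω | R ω > t} ≤ chiSquared (p : ℝ) {z | z > t} := by
  intro t _
  have hjoint := (indepFun_iff_map_prod_eq_prod_map_map hX.aemeasurable hY.aemeasurable).1 hindep
  rw [hXlaw, hYlaw, mvGaussianId, mvGaussianId,
    ← (measurePreserving_arrowProdEquivProdArrow ℝ ℝ (Fin p) (fun i => gaussianReal (μ₁ i) 1)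
      (fun i => gaussianReal (β * μ₁ i) 1)).map_eq] at hjoint
  let g : ℝ × ℝ → ℝ := fun q => (q.2 - β * q.1) / √(1 + β ^ 2)
  have hg : Measurable g := by fun_prop
  let G : (Fin p → ℝ) × (Fin p → ℝ) → (Fin p → ℝ) := fun q i => g (q.1 i, q.2 i)
  have hG : Measurable G := by fun_prop
  have hZ : Measure.map (fun ω i => g (X ω i, Y ω i)) ℙ
      = Measure.pi fun _ : Fin p => gaussianReal 0 1 := by
    have h1 := congrArg (Measure.map G) hjoint
    rw [Measure.map_map hG (by fun_prop), Measure.map_map hG (MeasurableEquiv.measurable _)] at h1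
    have h2 : (G ∘ fun ω => (X ω, Y ω)) = fun ω i => g (X ω i, Y ω i) := rfl
    have h3 : (G ∘ (MeasurableEquiv.arrowProdEquivProdArrow ℝ ℝ (Fin p))) =
      fun q i => g (q i) := rfl
    have h4 : ∀ i, ((gaussianReal (μ₁ i) 1).prod (gaussianReal (β * μ₁ i) 1)).map g
      = gaussianReal 0 1 := fun i => aux_lin (μ₁ i) β
    have : ∀ i, SigmaFinite (((gaussianReal (μ₁ i) 1).prod (gaussianReal (β * μ₁ i) 1)).map g) := by
      intro i; rw [h4]; infer_instance
    rw [h2, h3, Measure.pi_map_pi (f := fun _ => g) (fun i => hg.aemeasurable)] at h1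
    rw [h1]
    simp_rw [h4]
  have hS := aux_chi p (by omega)
  rw [← hZ, Measure.map_map (by fun_prop) (by fun_prop)] at hS
  rw [chiSquared, ← hS, show {z : ℝ | z > t} = Set.Ioi t from rfl, Measure.map_apply (by fun_prop) measurableSet_Ioi]
  apply measure_mono
  intro ω hω
  have hω : t < R ω := hω
  refine lt_of_lt_of_le hω ?_
  rw [hR]
  refine (ciInf_le ⟨0, ?_⟩ β).trans (le_of_eq ?_)
  · rintro _ ⟨b, rfl⟩
    positivity
  · simp only [Function.comp, g, div_pow]
    rw [Real.sq_sqrt (by positivity), Finset.sum_div]
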